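/- Consider the two-player Stag-Hunt game G with action sets A₁ = A₂ = {Stag, Hare} and utilities (u₁,u₂) given by (Stag,Stag) = (4,4), (Stag,Hare) = (1,3), (Hare,Stag) = (3,1), (Hare,Hare) = (2,2). For every initial reference point a₀ ∈ A, every positive integer k, and every admissible player function I, the no-harm equilibrium outcome of Γ(a₀,k,I) is (Stag,Stag). -/

import Mathlib

namespace NoHarm

/-- A finite normal form game with `n` players: finite action sets `A i`,
nonempty, with decidable equality, and utility functions `u i : Profile → ℝ`. -/
structure Game (n : ℕ) where
  A : Fin n → Type
  fintypeA : ∀ i, Fintype (A i)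
  decA : ∀ i, DecidableEq (A i)
  neA : ∀ i, Nonempty (A i)
  u : Fin n → (∀ i, A i) → ℝ

attribute [instance] Game.fintypeA Game.decA Game.neA

/-- Action profiles of `G`. -/
abbrev Profile {n : ℕ} (G : Game n) : Type := ∀ i, G.A i

/-- A recorded move in the extensive form game `Γ`: the acting player together
with their choice (`none` = pass, `some a` = choose action `a`; choosing the
current component of the state is "staying", any other action is "moving"). -/
abbrev Move {n : ℕ} (G : Game n) : Type := Σ i : Fin n, Option (G.A i)

/-- A node of `Γ`, identified with the history of moves leading to it
(the root is `[]`). -/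
abbrev Hist {n : ℕ} (G : Game n) : Type := List (Move G)

variable {n : ℕ}

/-- One step of the left fold computing, along a history, the triple
(current state, current reference point, player who established the current
reference point by staying -- `none` for the initial reference point). -/
def stepFold (G : Game n) (x : Profile G × Profile G × Option (Fin n)) (m : Move G) :
    Profile G × Profile G × Option (Fin n) :=
  match m with
  | ⟨_, none⟩ => x
  | ⟨i, some a⟩ =>
    if a = x.1 i then (x.1, x.1, some i)
    else (Function.update x.1 i a, x.2.1, x.2.2)

/-- The (state, reference point, proposer) data at the node `h` of `Γ(a0,·,·)`. -/
def fold3 (G : Game n) (a0 : Profile G) (h : Hist G) :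
    Profile G × Profile G × Option (Fin n) :=
  h.foldl (stepFold G) (a0, a0, none)

/-- The state `S(x)` at a node. -/
def state (G : Game n) (a0 : Profile G) (h : Hist G) : Profile G := (fold3 G a0 h).1

/-- The reference point at a node (the most recent state at which a player
stayed, initially `a0`). -/
def refpt (G : Game n) (a0 : Profile G) (h : Hist G) : Profile G := (fold3 G a0 h).2.1

/-- The player who established the current reference point by staying
(`none` if it is still the initial reference point `a0`). -/
def proposer (G : Game n) (a0 : Profile G) (h : Hist G) : Option (Fin n) :=
  (fold3 G a0 h).2.2

/-- `m` is a stay action at the node `h`: the mover chooses exactly the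
component of the current state belonging to them. -/
def IsStay (G : Game n) (a0 : Profile G) (h : Hist G) (m : Move G) : Prop :=
  m.2 = some (state G a0 h m.1)

/-- Termination condition (i): one player stayed at a state `b`, making it
the reference point, and a different player subsequently also stays at `b`. -/
def TerminalStay (G : Game n) (a0 : Profile G) (h : Hist G) : Prop :=
  ∃ (h' : Hist G) (m : Move G) (i : Fin n),
    h = h' ++ [m] ∧ IsStay G a0 h' m ∧ refpt G a0 h' = state G a0 h' ∧
    proposer G a0 h' = some i ∧ i ≠ m.1

/-- Termination condition (ii): all `n` players consecutively pass
(the last `n` moves are passes and every player is among their movers). -/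
def TerminalPass (G : Game n) (h : Hist G) : Prop :=
  n ≤ h.length ∧ (∀ m ∈ h.drop (h.length - n), m.2 = none) ∧
    (∀ i : Fin n, ∃ m ∈ h.drop (h.length - n), m.1 = i)

/-- Terminal nodes of `Γ(a0,·,·)`. -/
def Terminal (G : Game n) (a0 : Profile G) (h : Hist G) : Prop :=
  TerminalStay G a0 h ∨ TerminalPass G h

/-- Number of predecessor nodes of `h` having the same state as `h` at which
the move `m` was made. -/
def countAct (G : Game n) (a0 : Profile G) (h : Hist G) (m : Move G) : ℕ :=
  ((Finset.range h.length).filter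
    (fun t => h[t]? = some m ∧ state G a0 (h.take t) = state G a0 h)).card

/-- Availability of the choice `c` for player `i` at node `h`: pass is always
available, and an action `a` is available iff `i` has chosen `a` at fewer than
`k` predecessor nodes carrying the same state as `h`. -/
def availAct (G : Game n) (a0 : Profile G) (k : ℕ) (h : Hist G) {i : Fin n}
    (c : Option (G.A i)) : Prop :=
  ∀ a : G.A i, c = some a → countAct G a0 h ⟨i, some a⟩ < k

/-- `h` is a (valid) node of the game tree of `Γ(a0,k,I)`: at each step the
recorded mover is the active player given by the player function `I`, the
chosen action was available, and no proper predecessor is terminal. -/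
structure IsNode (G : Game n) (a0 : Profile G) (k : ℕ) (I : Hist G → Fin n)
    (h : Hist G) : Prop where
  mover : ∀ (t : ℕ) (ht : t < h.length), (h.get ⟨t, ht⟩).1 = I (h.take t)
  avail : ∀ (t : ℕ) (ht : t < h.length), availAct G a0 k (h.take t) (h.get ⟨t, ht⟩).2
  nonterm : ∀ t < h.length, ¬ Terminal G a0 (h.take t)

/-- The player function is admissible: along every path of play the numbers of
nodes at which any two players have been active differ by at most one. -/
def Admissible (G : Game n) (a0 : Profile G) (k : ℕ) (I : Hist G → Fin n) : Prop :=
  ∀ h, IsNode G a0 k I h → ∀ i j : Fin n,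
    (h.map Sigma.fst).count i ≤ (h.map Sigma.fst).count j + 1

/-- A pure strategy of player `i`: a choice (pass or an action) at every node. -/
abbrev Strategy (G : Game n) (i : Fin n) : Type := Hist G → Option (G.A i)

/-- A pure strategy profile. -/
abbrev StratProfile (G : Game n) : Type := ∀ i, Strategy G i

/-- A strategy profile is valid if at every non-terminal node of the tree the
active player's prescribed choice is available. -/
def ValidProfile (G : Game n) (a0 : Profile G) (k : ℕ) (I : Hist G → Fin n)
    (σ : StratProfile G) : Prop :=
  ∀ h, IsNode G a0 k I h → ¬ Terminal G a0 h → availAct G a0 k h (σ (I h) h)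

open Classical in
/-- Play according to `σ` for (at most) the given number of steps from a node,
stopping at terminal nodes. -/
noncomputable def playN (G : Game n) (a0 : Profile G) (I : Hist G → Fin n)
    (σ : StratProfile G) : ℕ → Hist G → Hist G
  | 0, h => h
  | (t + 1), h =>
    if Terminal G a0 h then h
    else playN G a0 I σ t (h ++ [⟨I h, σ (I h) h⟩])

/-- A (generous) upper bound for the length of any play of `Γ(a0,k,I)`. -/
def bound (G : Game n) (k : ℕ) : ℕ :=
  ((k + 2) * (Fintype.card (Profile G) + 2) * ((∑ i, Fintype.card (G.A i)) + 2) + 2)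
    * (n + 2) * 4

/-- The outcome of `σ` in the subgame rooted at `h`: the reference point at the
terminal node reached by playing `σ` from `h`. -/
noncomputable def outcomeFrom (G : Game n) (a0 : Profile G) (k : ℕ)
    (I : Hist G → Fin n) (σ : StratProfile G) (h : Hist G) : Profile G :=
  refpt G a0 (playN G a0 I σ (bound G k + 1) h)

/-- The outcome of the strategy profile `σ` in `Γ(a0,k,I)`. -/
noncomputable def outcome (G : Game n) (a0 : Profile G) (k : ℕ)
    (I : Hist G → Fin n) (σ : StratProfile G) : Profile G :=
  outcomeFrom G a0 k I σ []

/-- `σ` satisfies the no-harm principle: every stay action it prescribes, at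
every (on- or off-path) non-terminal node of the tree, does not harm any other
player relative to the reference point at that node. -/
def SatNHP (G : Game n) (a0 : Profile G) (k : ℕ) (I : Hist G → Fin n)
    (σ : StratProfile G) : Prop :=
  ∀ h, IsNode G a0 k I h → ¬ Terminal G a0 h →
    σ (I h) h = some (state G a0 h (I h)) →
    ∀ j, j ≠ I h → G.u j (refpt G a0 h) ≤ G.u j (state G a0 h)

/-- No-harm equilibrium of `Γ(a0,k,I)`: a valid strategy profile satisfying the
NHP such that at every non-terminal node the active player's choice is a best
response among deviations keeping the profile valid and NHP-compliant. -/
def NHE (G : Game n) (a0 : Profile G) (k : ℕ) (I : Hist G → Fin n)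
    (σ : StratProfile G) : Prop :=
  ValidProfile G a0 k I σ ∧ SatNHP G a0 k I σ ∧
  ∀ h, IsNode G a0 k I h → ¬ Terminal G a0 h →
    ∀ τ : Strategy G (I h),
      ValidProfile G a0 k I (Function.update σ (I h) τ) →
      SatNHP G a0 k I (Function.update σ (I h) τ) →
      G.u (I h) (outcomeFrom G a0 k I (Function.update σ (I h) τ) h) ≤
        G.u (I h) (outcomeFrom G a0 k I σ h)

/-- Subgame perfect equilibrium of `Γ(a0,k,I)` (no NHP constraint). -/
def SPE (G : Game n) (a0 : Profile G) (k : ℕ) (I : Hist G → Fin n)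
    (σ : StratProfile G) : Prop :=
  ValidProfile G a0 k I σ ∧
  ∀ h, IsNode G a0 k I h → ¬ Terminal G a0 h →
    ∀ τ : Strategy G (I h),
      ValidProfile G a0 k I (Function.update σ (I h) τ) →
      G.u (I h) (outcomeFrom G a0 k I (Function.update σ (I h) τ) h) ≤
        G.u (I h) (outcomeFrom G a0 k I σ h)

/-- `b` Pareto dominates `a`. -/
def ParetoDom (G : Game n) (b a : Profile G) : Prop :=
  (∀ i, G.u i a ≤ G.u i b) ∧ ∃ i, G.u i a < G.u i b

/-- `a` is Pareto optimal. -/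
def ParetoOpt (G : Game n) (a : Profile G) : Prop := ∀ b, ¬ ParetoDom G b a

/-- `b` strictly Pareto dominates `a`. -/
def StrictDom (G : Game n) (b a : Profile G) : Prop := ∀ i, G.u i a < G.u i b

/-- `a` is weakly Pareto optimal. -/
def WeakParetoOpt (G : Game n) (a : Profile G) : Prop := ∀ b, ¬ StrictDom G b a

/-- Preferences are strict: each utility function is injective on profiles. -/
def StrictPrefs (G : Game n) : Prop := ∀ i, Function.Injective (G.u i)


/-- The Stag-Hunt game: actions `0 = Stag`, `1 = Hare`, payoffs
`(Stag,Stag)=(4,4), (Stag,Hare)=(1,3), (Hare,Stag)=(3,1), (Hare,Hare)=(2,2)`. -/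
def stagHunt : Game 2 where
  A _ := Fin 2
  fintypeA _ := inferInstance
  decA _ := inferInstance
  neA _ := inferInstance
  u i s :=
    if s 0 = 0 then
      (if s 1 = 0 then 4 else (if i = 0 then 1 else 3))
    else
      (if s 1 = 0 then (if i = 0 then 3 else 1) else 2)

/-- (Stag,Stag). -/
def stagStag : Profile stagHunt := fun _ => (0 : Fin 2)

section Helpers

variable {G : Game n} {a0 : Profile G} {k : ℕ} {I : Hist G → Fin n}

theorem fold3_snoc (h : Hist G) (m : Move G) :
    fold3 G a0 (h ++ [m]) = stepFold G (fold3 G a0 h) m := by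
  simp [fold3, List.foldl_append]

theorem isNode_nil : IsNode G a0 k I [] :=
  ⟨fun t ht => by simp at ht, fun t ht => by simp at ht, fun t ht => by simp at ht⟩

theorem IsNode.take {h : Hist G} (H : IsNode G a0 k I h) (s : ℕ) :
    IsNode G a0 k I (h.take s) := by
  refine ⟨fun t ht => ?_, fun t ht => ?_, fun t ht => ?_⟩
  · have ht' : t < s ∧ t < h.length := by simpa using ht
    have := H.mover t ht'.2
    rw [List.take_take, min_eq_left ht'.1.le]
    simpa using this
  · have ht' : t < s ∧ t < h.length := by simpa using ht
    have := H.avail t ht'.2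
    rw [List.take_take, min_eq_left ht'.1.le]
    have e : (h.take s).get ⟨t, ht⟩ = h.get ⟨t, ht'.2⟩ := by simp
    rw [e]; exact this
  · have ht' : t < s ∧ t < h.length := by simpa using ht
    rw [List.take_take, min_eq_left ht'.1.le]
    exact H.nonterm t ht'.2

theorem IsNode.snoc {h : Hist G} (H : IsNode G a0 k I h) (ht : ¬ Terminal G a0 h)
    {c : Option (G.A (I h))} (hc : availAct G a0 k h c) :
    IsNode G a0 k I (h ++ [⟨I h, c⟩]) := by
  have key : ∀ t, t < (h ++ [(⟨I h, c⟩ : Move G)]).length → t < h.length ∨ t = h.length := by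
    intro t ht; simp at ht; omega
  refine ⟨fun t h1 => ?_, fun t h1 => ?_, fun t h1 => ?_⟩
  · rcases key t h1 with h2 | rfl
    · have := H.mover t h2
      rw [List.take_append_of_le_length h2.le]
      simpa [List.getElem_append_left h2] using this
    · simp
  · rcases key t h1 with h2 | rfl
    · have := H.avail t h2
      rw [List.take_append_of_le_length h2.le]
      have e : (h ++ [(⟨I h, c⟩ : Move G)]).get ⟨t, h1⟩ = h.get ⟨t, h2⟩ := by
        simp [List.getElem_append_left h2]
      rw [e]; exact this
    · have e : (h ++ [(⟨I h, c⟩ : Move G)]).get ⟨h.length, h1⟩ = ⟨I h, c⟩ := by simp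
      rw [e]; simpa using hc
  · rcases key t h1 with h2 | rfl
    · rw [List.take_append_of_le_length h2.le]; exact H.nonterm t h2
    · simpa using ht

theorem playN_term (σ : StratProfile G) (t : ℕ) {h : Hist G} (ht : Terminal G a0 h) :
    playN G a0 I σ t h = h := by
  cases t <;> simp [playN, ht]

theorem playN_succ (σ : StratProfile G) (t : ℕ) {h : Hist G} (ht : ¬ Terminal G a0 h) :
    playN G a0 I σ (t + 1) h = playN G a0 I σ t (h ++ [⟨I h, σ (I h) h⟩]) := by
  simp [playN, ht]

theorem playN_spec {σ : StratProfile G} (hσ : ValidProfile G a0 k I σ) (t : ℕ) :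
    ∀ h, IsNode G a0 k I h → IsNode G a0 k I (playN G a0 I σ t h) ∧
      (Terminal G a0 (playN G a0 I σ t h) ∨
        (playN G a0 I σ t h).length = h.length + t) := by
  induction t with
  | zero => intro h H; simp [playN, H]
  | succ t ih =>
    intro h H
    by_cases ht : Terminal G a0 h
    · rw [playN_term _ _ ht]; exact ⟨H, Or.inl ht⟩
    · rw [playN_succ _ _ ht]
      have := ih _ (H.snoc ht (hσ h H ht))
      refine ⟨this.1, this.2.imp id fun e => ?_⟩
      rw [e]; simp; omega

theorem playN_add (σ : StratProfile G) (s t : ℕ) :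
    ∀ h, playN G a0 I σ (s + t) h = playN G a0 I σ t (playN G a0 I σ s h) := by
  induction s with
  | zero => intro h; simp [playN]
  | succ s ih =>
    intro h
    by_cases ht : Terminal G a0 h
    · rw [playN_term _ _ ht, playN_term _ _ ht, playN_term _ _ ht]
    · rw [show s + 1 + t = (s + t) + 1 by omega, playN_succ _ _ ht, playN_succ _ _ ht, ih]

theorem playN_stable {σ : StratProfile G} (hσ : ValidProfile G a0 k I σ) {B : ℕ}
    (hB : ∀ h, IsNode G a0 k I h → h.length ≤ B) {h : Hist G} (H : IsNode G a0 k I h)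
    {s t : ℕ} (hs : B + 1 ≤ h.length + s) (hst : s ≤ t) :
    playN G a0 I σ t h = playN G a0 I σ s h := by
  obtain ⟨d, rfl⟩ := Nat.exists_eq_add_of_le hst
  rw [playN_add]
  obtain ⟨h1, h2⟩ := playN_spec hσ s h H
  rcases h2 with h2 | h2
  · exact playN_term _ _ h2
  · have := hB _ h1; omega

/-- feasible choices -/
def OkC (G : Game n) (a0 : Profile G) (k : ℕ) (h : Hist G) (i : Fin n)
    (c : Option (G.A i)) : Prop :=
  availAct G a0 k h c ∧
    (c = some (state G a0 h i) → ∀ j, j ≠ i → G.u j (refpt G a0 h) ≤ G.u j (state G a0 h))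

theorem okC_none (h : Hist G) (i : Fin n) : OkC G a0 k h i none :=
  ⟨fun a ha => by simp at ha, fun ha => by simp at ha⟩

theorem exists_best (W : Hist G → Profile G) (h : Hist G) (i : Fin n) :
    ∃ c, OkC G a0 k h i c ∧ ∀ c', OkC G a0 k h i c' →
      G.u i (W (h ++ [⟨i, c'⟩])) ≤ G.u i (W (h ++ [⟨i, c⟩])) := by
  obtain ⟨c, hc, hm⟩ := Set.exists_max_image {c | OkC G a0 k h i c}
    (fun c => G.u i (W (h ++ [⟨i, c⟩]))) (Set.toFinite _) ⟨none, okC_none h i⟩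
  exact ⟨c, hc, hm⟩

noncomputable def bestC (G : Game n) (a0 : Profile G) (k : ℕ) (W : Hist G → Profile G)
    (h : Hist G) (i : Fin n) : Option (G.A i) :=
  Classical.choose (exists_best (a0 := a0) (k := k) W h i)

theorem bestC_spec (W : Hist G → Profile G) (h : Hist G) (i : Fin n) :
    OkC G a0 k h i (bestC G a0 k W h i) ∧ ∀ c', OkC G a0 k h i c' →
      G.u i (W (h ++ [⟨i, c'⟩])) ≤ G.u i (W (h ++ [⟨i, bestC G a0 k W h i⟩])) :=
  Classical.choose_spec (exists_best (a0 := a0) (k := k) W h i)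

open Classical in
noncomputable def Val (G : Game n) (a0 : Profile G) (k : ℕ) (I : Hist G → Fin n) :
    ℕ → Hist G → Profile G
  | 0, h => refpt G a0 h
  | (t + 1), h => if Terminal G a0 h then refpt G a0 h
      else Val G a0 k I t (h ++ [⟨I h, bestC G a0 k (Val G a0 k I t) h (I h)⟩])

theorem exists_nhe (hB : ∀ h, IsNode G a0 k I h → h.length ≤ bound G k) :
    ∃ σ : StratProfile G, NHE G a0 k I σ := by
  set B := bound G k with hBdef
  let σ : StratProfile G := fun i h => bestC G a0 k (Val G a0 k I (B - h.length)) h i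
  have hv : ValidProfile G a0 k I σ := fun h _ _ => (bestC_spec _ _ _).1.1
  have hn : SatNHP G a0 k I σ := fun h _ _ e => (bestC_spec _ _ _).1.2 e
  refine ⟨σ, hv, hn, ?_⟩
  have val : ∀ t h, IsNode G a0 k I h → t + h.length = B + 1 →
      refpt G a0 (playN G a0 I σ t h) = Val G a0 k I t h := by
    intro t
    induction t with
    | zero => intro h _ _; rfl
    | succ t ih =>
      intro h H hl
      by_cases ht : Terminal G a0 h
      · rw [playN_term _ _ ht]; simp [Val, ht]
      · rw [playN_succ _ _ ht, ih _ (H.snoc ht (hv h H ht)) (by simp; omega)]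
        have : B - h.length = t := by omega
        simp [Val, ht, σ, this]
  intro h0 H0 _ τ hv' hn'
  generalize I h0 = i at τ hv' hn' ⊢
  have dev : ∀ t h, IsNode G a0 k I h → t + h.length = B + 1 →
      G.u i (refpt G a0 (playN G a0 I (Function.update σ i τ) t h)) ≤
        G.u i (Val G a0 k I t h) := by
    intro t
    induction t with
    | zero => intro h _ _; exact le_rfl
    | succ t ih =>
      intro h H hl
      by_cases ht : Terminal G a0 h
      · rw [playN_term _ _ ht]; simp [Val, ht]
      · rw [playN_succ _ _ ht]
        refine (ih _ (H.snoc ht (hv' h H ht)) (by simp; omega)).trans ?_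
        have e : B - h.length = t := by omega
        have e2 : Val G a0 k I (t+1) h = Val G a0 k I t
          (h ++ [⟨I h, bestC G a0 k (Val G a0 k I t) h (I h)⟩]) := by simp [Val, ht]
        rw [e2]
        by_cases hi : I h = i
        · have ok : OkC G a0 k h (I h) (Function.update σ i τ (I h) h) :=
            ⟨hv' h H ht, hn' h H ht⟩
          have := (bestC_spec (Val G a0 k I t) h (I h)).2 _ ok
          subst hi
          exact this
        · rw [Function.update_of_ne hi]
          simp [σ, e]
  have hl := hB _ H0
  unfold outcomeFrom
  rw [playN_stable hv' hB H0 (s := B + 1 - h0.length) (by omega) (by omega),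
    playN_stable hv hB H0 (s := B + 1 - h0.length) (by omega) (by omega),
    val _ _ H0 (by omega)]
  exact dev _ _ H0 (by omega)

/-- One-shot deviations. -/
theorem one_shot (hB : ∀ h, IsNode G a0 k I h → h.length ≤ bound G k)
    {σ : StratProfile G} (hσ : NHE G a0 k I σ) {h : Hist G} (H : IsNode G a0 k I h)
    (ht : ¬ Terminal G a0 h) {c : Option (G.A (I h))} (hc : OkC G a0 k h (I h) c) :
    G.u (I h) (outcomeFrom G a0 k I σ (h ++ [⟨I h, c⟩])) ≤
      G.u (I h) (outcomeFrom G a0 k I σ h) := by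
  classical
  obtain ⟨hv, hn, hbr⟩ := hσ
  let τ : Strategy G (I h) := Function.update (σ (I h)) h c
  have hh : Function.update σ (I h) τ (I h) h = c := by simp [τ]
  have hne : ∀ x, x ≠ h → ∀ i, Function.update σ (I h) τ i x = σ i x := by
    intro x hx i
    by_cases hi : i = I h
    · subst hi; simp [τ, hx]
    · rw [Function.update_of_ne hi]
  have hv' : ValidProfile G a0 k I (Function.update σ (I h) τ) := by
    intro x X xt
    by_cases hx : x = h
    · subst hx; rw [hh]; exact hc.1
    · rw [hne x hx]; exact hv x X xt
  have hn' : SatNHP G a0 k I (Function.update σ (I h) τ) := by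
    intro x X xt
    by_cases hx : x = h
    · subst hx; rw [hh]; exact hc.2
    · rw [hne x hx]; exact hn x X xt
  have same : ∀ t x, h.length < x.length →
      playN G a0 I (Function.update σ (I h) τ) t x = playN G a0 I σ t x := by
    intro t
    induction t with
    | zero => intro x _; rfl
    | succ t ih =>
      intro x hx
      by_cases xt : Terminal G a0 x
      · rw [playN_term _ _ xt, playN_term _ _ xt]
      · rw [playN_succ _ _ xt, playN_succ _ _ xt, hne x (by rintro rfl; omega)]
        exact ih _ (by simp; omega)
  have := hbr h H ht τ hv' hn'
  have e : outcomeFrom G a0 k I (Function.update σ (I h) τ) h =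
      outcomeFrom G a0 k I σ (h ++ [⟨I h, c⟩]) := by
    unfold outcomeFrom
    rw [playN_succ _ _ ht, hh, same _ _ (by simp),
      playN_stable hv hB (H.snoc ht hc.1) (s := bound G k) (t := bound G k + 1)
        (by simp only [List.length_append, List.length_singleton]; omega) (by omega)]
  rwa [e] at this

end Helpers

section Bound

variable {G : Game 2} {a0 : Profile G} {k : ℕ} {I : Hist G → Fin 2}

theorem count_snoc (h : Hist G) (t : ℕ) (ht : t < h.length) (i : Fin 2) :
    ((h.take (t+1)).map Sigma.fst).count i =
      ((h.take t).map Sigma.fst).count i + if (h[t]).1 = i then 1 else 0 := by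
  rw [List.take_succ_eq_append_getElem ht]
  rw [List.map_append, List.count_append]
  simp [List.count_cons]

theorem term_pass (h : Hist G) (t : ℕ) (ht : t + 1 < h.length) (h0 : (h[t]).2 = none)
    (h1 : (h[t+1]).2 = none) (hne : (h[t]).1 ≠ (h[t+1]).1) :
    Terminal G a0 (h.take (t+2)) := by
  right
  have e : (h.take (t+2)).drop ((h.take (t+2)).length - 2) = [h[t], h[t+1]] := by
    rw [List.take_succ_eq_append_getElem ht, List.take_succ_eq_append_getElem (by omega : t < h.length)]
    have : (h.take t).length = t := by simp; omega
    rw [List.append_assoc, List.length_append, this]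
    simp [this]
  refine ⟨by simp; omega, ?_, ?_⟩
  · rw [e]; simp [h0, h1]
  · rw [e]; intro i
    simp only [List.mem_cons, List.not_mem_nil, or_false, exists_eq_or_imp, exists_eq_left]
    omega

theorem nonpass_block (hI : Admissible G a0 k I) {h : Hist G} (H : IsNode G a0 k I h)
    (t : ℕ) (ht : t + 3 < h.length) :
    ∃ s, ∃ hs : s < h.length, t ≤ s ∧ s < t + 4 ∧ (h[s]).2 ≠ none := by
  by_contra hcon
  push Not at hcon
  have p0 := hcon t (by omega) (by omega) (by omega)
  have p1 := hcon (t+1) (by omega) (by omega) (by omega)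
  have p2 := hcon (t+2) (by omega) (by omega) (by omega)
  by_cases e1 : (h[t]).1 = (h[t+1]).1
  · by_cases e2 : (h[t+1]).1 = (h[t+2]).1
    · obtain ⟨j, hj⟩ : ∃ j : Fin 2, j ≠ (h[t]).1 := exists_ne _
      have a1 := hI _ (H.take (t+3)) (h[t]).1 j
      have a2 := hI _ (H.take t) j (h[t]).1
      rw [count_snoc h (t+2) (by omega), count_snoc h (t+1) (by omega),
        count_snoc h t (by omega), count_snoc h (t+2) (by omega), count_snoc h (t+1) (by omega),
        count_snoc h t (by omega)] at a1
      rw [← e2, ← e1] at a1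
      rw [if_pos rfl, if_neg hj.symm] at a1
      omega
    · exact H.nonterm (t+3) (by omega) (term_pass h (t+1) (by omega) p1 p2 e2)
  · exact H.nonterm (t+2) (by omega) (term_pass h t (by omega) p0 p1 e1)

def NonPass (h : Hist G) (t : ℕ) : Prop := ∃ m : Move G, h[t]? = some m ∧ m.2 ≠ none

open Classical in
theorem nonpass_card {h : Hist G} (H : IsNode G a0 k I h) :
    ((Finset.range h.length).filter
      (NonPass h)).card ≤
      k * (Fintype.card (Profile G) * Fintype.card (Σ i, G.A i)) := by
  classical
  set S := (Finset.range h.length).filter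
      (NonPass h) with hS
  have ne : S.card = 0 ∨ 0 < S.card := by omega
  rcases ne with ne | ne
  · omega
  let T : Finset (Profile G × Move G) := Finset.image
    (fun p : Profile G × (Σ i, G.A i) => (p.1, ⟨p.2.1, some p.2.2⟩)) Finset.univ
  have hT : T.card ≤ Fintype.card (Profile G) * Fintype.card (Σ i, G.A i) := by
    refine Finset.card_image_le.trans ?_
    simp [Fintype.card_prod]
  let f : ℕ → Profile G × Move G := fun t =>
    (state G a0 (h.take t), (h[t]?).getD ⟨0, none⟩)
  have hf : ∀ t ∈ S, f t ∈ T := by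
    intro t ht
    rw [hS, Finset.mem_filter] at ht
    obtain ⟨-, ⟨i, c⟩, e, hm⟩ := ht
    rcases c with _ | a
    · exact absurd rfl hm
    exact Finset.mem_image.2 ⟨(state G a0 (h.take t), ⟨i, a⟩), Finset.mem_univ _, by simp [f, e]⟩
  have fib : ∀ b ∈ T, (S.filter (fun t => f t = b)).card ≤ k := by
    intro b hb
    set F := S.filter (fun t => f t = b) with hF
    by_cases hne : F.Nonempty
    · obtain ⟨M, hM, hmax⟩ := F.exists_max_image id hne
      obtain ⟨hMS, hMb⟩ := Finset.mem_filter.1 hM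
      rw [hS, Finset.mem_filter] at hMS
      obtain ⟨hMr, ⟨i, c⟩, e, hm⟩ := hMS
      rcases c with _ | a
      · exact absurd rfl hm
      have hMl : M < h.length := by simpa using hMr
      have av := H.avail M hMl
      have e' : h.get ⟨M, hMl⟩ = ⟨i, some a⟩ := by
        simpa [List.getElem?_eq_getElem hMl] using e
      rw [e'] at av
      have cnt := av a rfl
      have sub : F.erase M ⊆ (Finset.range (h.take M).length).filter
          (fun t => (h.take M)[t]? = some ⟨i, some a⟩ ∧
            state G a0 ((h.take M).take t) = state G a0 (h.take M)) := by
        intro t ht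
        obtain ⟨htM, htF⟩ := Finset.mem_erase.1 ht
        have hle : t ≤ M := hmax t htF
        have hlt : t < M := by omega
        obtain ⟨htS, htb⟩ := Finset.mem_filter.1 htF
        rw [hS, Finset.mem_filter] at htS
        obtain ⟨_, m', e'', _⟩ := htS
        have hff : f t = f M := htb.trans hMb.symm
        simp only [f, e, e'', Option.getD_some, Prod.mk.injEq] at hff
        refine Finset.mem_filter.2 ⟨by simp; omega, ?_, ?_⟩
        · rw [List.getElem?_take_of_lt hlt, e'', hff.2]
        · rw [List.take_take, min_eq_left hle]; exact hff.1
      have c2 : (F.erase M).card ≤ countAct G a0 (h.take M) ⟨i, some a⟩ := by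
        unfold countAct
        convert Finset.card_le_card sub
      change countAct G a0 (h.take M) ⟨i, some a⟩ < k at cnt
      rw [Finset.card_erase_of_mem hM] at c2
      have : 0 < F.card := Finset.card_pos.2 hne
      omega
    · rw [Finset.not_nonempty_iff_eq_empty.1 hne]; simp
  calc S.card ≤ k * T.card := Finset.card_le_mul_card_image_of_maps_to hf k fib
    _ ≤ _ := Nat.mul_le_mul_left _ hT

theorem length_le (hI : Admissible G a0 k I) {h : Hist G} (H : IsNode G a0 k I h) :
    h.length ≤ bound G k := by
  classical
  have h1 := nonpass_card H
  set S := (Finset.range h.length).filter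
      (NonPass h) with hS
  have sub : Finset.range (h.length / 4) ⊆ S.image (· / 4) := by
    intro q hq
    have hq' : q < h.length / 4 := by simpa using hq
    obtain ⟨s, hs, h2, h3, h4⟩ := nonpass_block hI H (4 * q) (by omega)
    exact Finset.mem_image.2 ⟨s, by
      rw [hS, Finset.mem_filter]
      exact ⟨by simpa using hs, h[s], by simp, h4⟩, by omega⟩
  have h2 := (Finset.card_le_card sub).trans Finset.card_image_le
  rw [Finset.card_range] at h2
  rw [Fintype.card_sigma] at h1
  unfold bound
  generalize Fintype.card (Profile G) = p at *
  generalize (∑ i, Fintype.card (G.A i)) = q at *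
  have : k * (p * q) ≤ (k + 2) * (p + 2) * (q + 2) := by
    rw [← mul_assoc]; gcongr <;> omega
  omega

end Bound

section Stag

variable {a0 : Profile stagHunt} {k : ℕ} {I : Hist stagHunt → Fin 2}

theorem u_le_four (i : Fin 2) (s : Profile stagHunt) : stagHunt.u i s ≤ 4 := by
  simp only [stagHunt]; split_ifs <;> norm_num

theorem u_stag (i : Fin 2) : stagHunt.u i stagStag = 4 := by
  simp [stagHunt, stagStag]

theorem eq_stag {i : Fin 2} {s : Profile stagHunt} (h : 4 ≤ stagHunt.u i s) :
    s = stagStag := by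
  simp only [stagHunt] at h
  split_ifs at h with h1 h2 <;> try (norm_num at h; done)
  funext j
  fin_cases j
  · exact h1
  · exact h2

theorem ref_inv {σ : StratProfile stagHunt} (hv : ValidProfile stagHunt a0 k I σ)
    (hn : SatNHP stagHunt a0 k I σ) (t : ℕ) : ∀ h, IsNode stagHunt a0 k I h →
      refpt stagHunt a0 h = stagStag →
      refpt stagHunt a0 (playN stagHunt a0 I σ t h) = stagStag := by
  induction t with
  | zero => intro h _ hr; exact hr
  | succ t ih =>
    intro h H hr
    by_cases ht : Terminal stagHunt a0 h
    · rwa [playN_term _ _ ht]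
    · rw [playN_succ _ _ ht]
      refine ih _ (H.snoc ht (hv h H ht)) ?_
      have n1 := hn h H ht
      generalize σ (I h) h = c at n1
      unfold refpt at hr ⊢
      rw [fold3_snoc]
      rcases c with _ | a
      · exact hr
      · simp only [stepFold]
        split_ifs with ha
        · obtain ⟨j, hj⟩ : ∃ j : Fin 2, j ≠ I h := exists_ne _
          have := n1 (by rw [ha]; rfl) j hj
          rw [refpt, hr, u_stag] at this
          exact eq_stag this
        · exact hr

theorem good_step (hI : Admissible stagHunt a0 k I)
    {σ : StratProfile stagHunt} (hσ : NHE stagHunt a0 k I σ) {h : Hist stagHunt}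
    (H : IsNode stagHunt a0 k I h)
    (ht : ¬ Terminal stagHunt a0 h) {c : Option (stagHunt.A (I h))}
    (hc : OkC stagHunt a0 k h (I h) c)
    (hg : outcomeFrom stagHunt a0 k I σ (h ++ [⟨I h, c⟩]) = stagStag) :
    outcomeFrom stagHunt a0 k I σ h = stagStag := by
  have := one_shot (fun h H => length_le hI H) hσ H ht hc
  rw [hg, u_stag] at this
  exact eq_stag this

theorem good_at_stag (hI : Admissible stagHunt a0 k I)
    {σ : StratProfile stagHunt} (hσ : NHE stagHunt a0 k I σ) {h : Hist stagHunt}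
    (H : IsNode stagHunt a0 k I h)
    (ht : ¬ Terminal stagHunt a0 h) (hs : state stagHunt a0 h = stagStag)
    (hc : countAct stagHunt a0 h ⟨I h, some (stagStag (I h))⟩ < k) :
    outcomeFrom stagHunt a0 k I σ h = stagStag := by
  have av : availAct stagHunt a0 k h (some (stagStag (I h))) := by
    intro a ha; rw [← Option.some.inj ha]; exact hc
  refine good_step hI hσ H ht (c := some (stagStag (I h))) ⟨av, ?_⟩ ?_
  · intro _ j _; rw [hs, u_stag]; exact u_le_four _ _
  · refine ref_inv hσ.1 hσ.2.1 _ _ (H.snoc ht av) ?_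
    unfold refpt
    rw [fold3_snoc]
    unfold state at hs
    simp [stepFold, hs]

theorem next_other (hI : Admissible stagHunt a0 k I) {m : Move stagHunt}
    (H : IsNode stagHunt a0 k I [m]) (ht : ¬ Terminal stagHunt a0 [m]) :
    I [m] ≠ m.1 := by
  intro e
  have := H.snoc (c := none) ht (fun a ha => by simp at ha)
  obtain ⟨j, hj⟩ : ∃ j : Fin 2, j ≠ m.1 := exists_ne _
  have := hI _ this m.1 j
  simp [e, hj.symm] at this

theorem count_nil (m : Move stagHunt) : countAct stagHunt a0 [] m = 0 := by
  simp [countAct]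

theorem count_zero {h : Hist stagHunt} {m : Move stagHunt}
    (H : ∀ t < h.length, h[t]? = some m → state stagHunt a0 (h.take t) ≠ state stagHunt a0 h) :
    countAct stagHunt a0 h m = 0 := by
  unfold countAct
  rw [Finset.card_eq_zero, Finset.filter_eq_empty_iff]
  intro t ht h1
  exact H t (by simpa using ht) h1.1 h1.2

theorem nonterm_nil : ¬ Terminal stagHunt a0 [] := by
  rintro (⟨h', m, i, e, _⟩ | ⟨e, _⟩)
  · simp at e
  · simp at e

theorem nonterm_one (m : Move stagHunt) : ¬ Terminal stagHunt a0 [m] := by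
  rintro (⟨h', m', i, e, _, _, hp, _⟩ | ⟨e, _⟩)
  · have : h' = [] := by
      have := congrArg List.length e
      simp at this; simpa using this
    subst this
    simp [proposer, fold3] at hp
  · simp at e

theorem nonterm_two {m : Move stagHunt} {i : Fin 2} {a : stagHunt.A i}
    (hp : proposer stagHunt a0 [m] = none) :
    ¬ Terminal stagHunt a0 ([m] ++ [⟨i, some a⟩]) := by
  rintro (⟨h', m', j, e, _, _, hp', _⟩ | ⟨_, e, _⟩)
  · obtain ⟨rfl, -⟩ := List.append_inj' e rfl
    rw [hp] at hp'; simp at hp'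
  · have := e ⟨i, some a⟩ (by simp)
    simp at this

theorem state_move {h : Hist stagHunt} {i : Fin 2} {a : stagHunt.A i}
    (ha : a ≠ state stagHunt a0 h i) :
    state stagHunt a0 (h ++ [⟨i, some a⟩]) = Function.update (state stagHunt a0 h) i a := by
  unfold state at *
  rw [fold3_snoc]
  simp [stepFold, ha]

theorem ok_move {h : Hist stagHunt} {i : Fin 2} {a : stagHunt.A i}
    (ha : a ≠ state stagHunt a0 h i) (hc : countAct stagHunt a0 h ⟨i, some a⟩ < k) :
    OkC stagHunt a0 k h i (some a) := by
  refine ⟨fun b hb => ?_, fun e => absurd (Option.some.inj e) ha⟩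
  rw [← Option.some.inj hb]; exact hc

end Stag

/-- In the Stag-Hunt game, for every initial reference point,
every `k ≥ 1` and every admissible player function, the no-harm equilibrium
outcome of `Γ(a0,k,I)` is `(Stag,Stag)`. -/
theorem stagHunt_nhe_outcome :
    ∀ a0 : Profile stagHunt, ∀ k : ℕ, 0 < k → ∀ I : Hist stagHunt → Fin 2,
      Admissible stagHunt a0 k I →
        (∃ σ : StratProfile stagHunt, NHE stagHunt a0 k I σ) ∧
        (∀ σ : StratProfile stagHunt, NHE stagHunt a0 k I σ →
          outcome stagHunt a0 k I σ = stagStag) := by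
  intro a0 k hk I hI
  refine ⟨exists_nhe (fun h H => length_le hI H), fun σ hσ => ?_⟩
  unfold outcome
  have two : ∀ (i j : Fin 2) (s : Profile stagHunt), j ≠ i → s i = stagStag i →
      s j = stagStag j → s = stagStag := by
    intro i j s hij hi hj
    funext l
    have : l = i ∨ l = j := by omega
    rcases this with rfl | rfl
    · exact hi
    · exact hj
  have N0 : IsNode stagHunt a0 k I [] := isNode_nil
  by_cases hS : a0 = stagStag
  · exact ref_inv hσ.1 hσ.2.1 _ _ N0 hS
  have s0 : state stagHunt a0 [] = a0 := rfl
  -- second stage: after the first move the other player can move to Stag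
  have second : ∀ c : Option (stagHunt.A (I [])), OkC stagHunt a0 k [] (I []) c →
      proposer stagHunt a0 [⟨I [], c⟩] = none →
      state stagHunt a0 [⟨I [], c⟩] (I []) = stagStag (I []) →
      (∀ j, j ≠ I [] → state stagHunt a0 [⟨I [], c⟩] j ≠ stagStag j) →
      outcomeFrom stagHunt a0 k I σ [] = stagStag := by
    intro c hc hp h0 h1
    have N1 : IsNode stagHunt a0 k I [⟨I [], c⟩] := N0.snoc nonterm_nil hc.1
    refine good_step hI hσ N0 nonterm_nil hc ?_
    have hne := next_other hI N1 (nonterm_one _)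
    simp only at hne
    have mv : stagStag (I [⟨I [], c⟩]) ≠ state stagHunt a0 [⟨I [], c⟩] (I [⟨I [], c⟩]) :=
      (h1 _ hne).symm
    have ok := ok_move (k := k) mv (by
      rw [count_zero]; · exact hk
      intro t ht e
      have : t = 0 := by simpa using ht
      subst this
      simp only [List.getElem?_cons_zero, Option.some.injEq] at e
      exact absurd (congrArg Sigma.fst e) hne.symm)
    have st := state_move mv
    have st2 : state stagHunt a0 ([⟨I [], c⟩] ++ [⟨I [⟨I [], c⟩], some (stagStag (I [⟨I [], c⟩]))⟩])
        = stagStag := by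
      rw [st]
      refine two (I []) (I [⟨I [], c⟩]) _ hne ?_ ?_
      · rw [Function.update_of_ne hne.symm]; exact h0
      · simp
    refine good_step hI hσ N1 (nonterm_one _) ok ?_
    refine good_at_stag (h := [⟨I [], c⟩] ++ [⟨I [⟨I [], c⟩], some (stagStag (I [⟨I [], c⟩]))⟩])
      hI hσ (N1.snoc (nonterm_one _) ok.1) (nonterm_two hp) st2 ?_
    rw [count_zero]; · exact hk
    intro t ht _
    rw [st2]
    have : t = 0 ∨ t = 1 := by simp at ht; omega
    rcases this with rfl | rfl
    · exact hS
    · intro e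
      have e' : state stagHunt a0 [⟨I [], c⟩] = stagStag := e
      rw [e'] at mv
      exact mv rfl
  obtain ⟨j, hj⟩ : ∃ j : Fin 2, j ≠ I [] := exists_ne _
  have uniq : ∀ l, l ≠ I [] → l = j := by intro l hl; omega
  by_cases hi : a0 (I []) = stagStag (I [])
  · have hj1 : a0 j ≠ stagStag j := fun e => hS (two _ _ _ hj hi e)
    exact second none (okC_none _ _) rfl hi (fun l hl => by rw [uniq l hl]; exact hj1)
  · have mv : stagStag (I []) ≠ state stagHunt a0 [] (I []) := fun e => hi e.symm
    have ok := ok_move (k := k) mv (by rw [count_nil]; exact hk)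
    have st := state_move mv
    by_cases hj0 : a0 j = stagStag j
    · refine good_step hI hσ N0 nonterm_nil ok ?_
      have st2 : state stagHunt a0 ([] ++ [⟨I [], some (stagStag (I []))⟩]) = stagStag := by
        rw [st]
        refine two (I []) j _ hj (by simp) ?_
        rw [Function.update_of_ne hj]; exact hj0
      refine good_at_stag hI hσ (N0.snoc nonterm_nil ok.1) (nonterm_one _) st2 ?_
      rw [count_zero]; · exact hk
      intro t ht _
      rw [st2]
      have : t = 0 := by simpa using ht
      subst this
      exact hS
    · refine second (some (stagStag (I []))) ok ?_ ?_ ?_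
      · have : ¬ stagStag (I []) = a0 (I []) := mv
        simp only [proposer, fold3, List.foldl_cons, List.foldl_nil, stepFold]
        rw [if_neg this]
      · exact (congrFun st _).trans (by simp)
      · intro l hl
        have e := congrFun st l
        rw [Function.update_of_ne hl] at e
        intro e2
        have e3 := e.symm.trans e2
        rw [uniq l hl] at e3
        exact hj0 e3

end NoHarm
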